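/- For every η > 0 and every a ∈ [0,1], the point (0, 0, a, a·e^{−3η}/(a·e^{−3η} + (1−a))) ∈ ℝ⁴ is a fixed point of the map G₁∘G₂, i.e. (G₁∘G₂)(0, 0, a, a·e^{−3η}/(a·e^{−3η} + 1 − a)) = (0, 0, a, a·e^{−3η}/(a·e^{−3η} + 1 − a)). -/

import Mathlib

/-- Two-step OMWU transition map for even starting time. -/
noncomputable def G1 (η : ℝ) (z : EuclideanSpace ℝ (Fin 4)) : EuclideanSpace ℝ (Fin 4) :=
  !₂[z 1,
    z 1 * Real.exp (3*η - 2*η * z 3 - η * z 2) /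
      (z 1 * Real.exp (3*η - 2*η * z 3 - η * z 2)
        + (1 - z 1) * Real.exp (2*η * z 3 + η * z 2)),
    z 3,
    z 3 * Real.exp (-(3*η) + 2*η * z 1 + η * z 0) /
      (z 3 * Real.exp (-(3*η) + 2*η * z 1 + η * z 0)
        + (1 - z 3) * Real.exp (-(2*η * z 1) - η * z 0))]

/-- Two-step OMWU transition map for odd starting time. -/
noncomputable def G2 (η : ℝ) (z : EuclideanSpace ℝ (Fin 4)) : EuclideanSpace ℝ (Fin 4) :=
  !₂[z 1,
    z 1 * Real.exp (-(3*η) + 2*η * z 3 + η * z 2) /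
      (z 1 * Real.exp (-(3*η) + 2*η * z 3 + η * z 2)
        + (1 - z 1) * Real.exp (-(2*η * z 3) - η * z 2)),
    z 3,
    z 3 * Real.exp (3*η - 2*η * z 1 - η * z 0) /
      (z 3 * Real.exp (3*η - 2*η * z 1 - η * z 0)
        + (1 - z 3) * Real.exp (2*η * z 1 + η * z 0))]

/-!
Where both of the first player's coordinates vanish, they remain zero and the second player's
current coordinate undergoes a multiplicative reweighting that no longer depends on the state: `G2`
multiplies the odds by `e^{3η}`, while `G1` multiplies them by `e^{-3η}`. If the last coordinate is
the `e^{-3η}`-reweighting of `a`, then `G2` turns it back into `a`, and `G1` restores it.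
-/

section Reweight

variable {K : Type*} [Field K]

/-- The multiplicative weights update on two actions: the new probability of the first action, when
its old probability is `x` and the two actions receive the weights `p` and `q`. It is defined on all
of `K` and takes the junk value `0` where the normalizing factor vanishes. -/
def reweight (p q x : K) : K :=
  x * p / (x * p + (1 - x) * q)

lemma reweight_zero_right (p q : K) : reweight p q 0 = 0 := by
  simp [reweight]

lemma reweight_self {p : K} (hp : p ≠ 0) (x : K) : reweight p p x = x := by
  rw [reweight, ← add_mul, add_sub_cancel, one_mul, mul_div_cancel_right₀ x hp]

lemma one_sub_reweight {p q x : K} (h : x * p + (1 - x) * q ≠ 0) :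
    1 - reweight p q x = (1 - x) * q / (x * p + (1 - x) * q) := by
  rw [reweight, one_sub_div h, add_sub_cancel_left]

lemma reweight_reweight {p q x : K} (h : x * p + (1 - x) * q ≠ 0) (p' q' : K) :
    reweight p' q' (reweight p q x) = reweight (p * p') (q * q') x := by
  rw [reweight, one_sub_reweight h, reweight, reweight, div_mul_eq_mul_div, div_mul_eq_mul_div,
    ← add_div, div_div_div_cancel_right₀ h, mul_assoc, mul_assoc]

lemma reweight_inv_reweight {p q x : K} (hp : p ≠ 0) (hq : q ≠ 0)
    (h : x * p + (1 - x) * q ≠ 0) : reweight p⁻¹ q⁻¹ (reweight p q x) = x := by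
  rw [reweight_reweight h, mul_inv_cancel₀ hp, mul_inv_cancel₀ hq, reweight_self one_ne_zero]

lemma mul_add_one_sub_pos [LinearOrder K] [IsStrictOrderedRing K] {p x : K} (hp : 0 < p)
    (hx : x ∈ Set.Icc (0 : K) 1) : 0 < x * p + 1 - x := by
  have h : x • p + (1 - x) • 1 ∈ Set.Ioi (0 : K) :=
    convex_Ioi 0 hp (Set.mem_Ioi.2 one_pos) hx.1 (sub_nonneg.2 hx.2) (add_sub_cancel x 1)
  simpa [add_sub_assoc] using h

end Reweight

lemma G1_eq_reweight (η w x y z : ℝ) :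
    G1 η !₂[w, x, y, z] =
      !₂[x, reweight (Real.exp (3 * η - 2 * η * z - η * y)) (Real.exp (2 * η * z + η * y)) x,
        z, reweight (Real.exp (-(3 * η) + 2 * η * x + η * w))
          (Real.exp (-(2 * η * x) - η * w)) z] :=
  rfl

lemma G2_eq_reweight (η w x y z : ℝ) :
    G2 η !₂[w, x, y, z] =
      !₂[x, reweight (Real.exp (-(3 * η) + 2 * η * z + η * y)) (Real.exp (-(2 * η * z) - η * y)) x,
        z, reweight (Real.exp (3 * η - 2 * η * x - η * w)) (Real.exp (2 * η * x + η * w)) z] :=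
  rfl

lemma G1_zero_zero (η y z : ℝ) :
    G1 η !₂[0, 0, y, z] = !₂[0, 0, z, reweight (Real.exp (-(3 * η))) 1 z] := by
  simp [G1_eq_reweight, reweight_zero_right]

lemma G2_zero_zero (η y z : ℝ) :
    G2 η !₂[0, 0, y, z] = !₂[0, 0, z, reweight (Real.exp (-(3 * η)))⁻¹ 1 z] := by
  simp [G2_eq_reweight, reweight_zero_right, Real.exp_neg]

theorem omwu_boundary_fixed_point_general (η a : ℝ)
    (h : a * Real.exp (-(3 * η)) + 1 - a ≠ 0) :
    (G1 η ∘ G2 η)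
      (!₂[0, 0, a, a * Real.exp (-(3 * η)) / (a * Real.exp (-(3 * η)) + 1 - a)] :
        EuclideanSpace ℝ (Fin 4)) =
    !₂[0, 0, a, a * Real.exp (-(3 * η)) / (a * Real.exp (-(3 * η)) + 1 - a)] := by
  have h_norm : a * Real.exp (-(3 * η)) + 1 - a = a * Real.exp (-(3 * η)) + (1 - a) * 1 := by ring
  have h_inv : reweight (Real.exp (-(3 * η)))⁻¹ 1 (reweight (Real.exp (-(3 * η))) 1 a) = a := by
    simpa only [inv_one] using
      reweight_inv_reweight (Real.exp_ne_zero _) one_ne_zero (h_norm ▸ h)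
  rw [h_norm, ← reweight, Function.comp_apply, G2_zero_zero, h_inv, G1_zero_zero]

/-- For every `a ∈ [0,1]`, the point `(0, 0, a, a·e^{−3η}/(a·e^{−3η}+1−a))` is a
fixed point of `G₁∘G₂`. -/
theorem omwu_boundary_fixed_point (η : ℝ) (hη : 0 < η) (a : ℝ) (ha : a ∈ Set.Icc (0:ℝ) 1) :
    (G1 η ∘ G2 η)
      (!₂[0, 0, a, a * Real.exp (-(3*η)) / (a * Real.exp (-(3*η)) + 1 - a)] :
        EuclideanSpace ℝ (Fin 4)) =
    !₂[0, 0, a, a * Real.exp (-(3*η)) / (a * Real.exp (-(3*η)) + 1 - a)] :=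
  omwu_boundary_fixed_point_general η a (mul_add_one_sub_pos (Real.exp_pos _) ha).ne'
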